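/- Suppose G is a unitary 1-design, that g_0, …, g_{d-1} ∈ G are such that the vectors |i⟩ := g_i|0⟩ form an orthonormal basis of ℂ^d, and that |Φ⟩ ∈ H_P satisfies Π_G|Φ⟩ ≠ 0. Define |ī⟩ := N ∑_{g∈G} ⟨0|g†|i⟩ ρ(g)|Φ⟩ with N = (d/|G|)/‖Π_G|Φ⟩‖. Then for all i, j ∈ {0,…,d−1} and all g ∈ G, the physical matrix element ⟨ī|ρ(g)|j̄⟩ equals the logical matrix element ⟨i|g|j⟩. -/

import Mathlib

open scoped ComplexConjugate ComplexInnerProductSpace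

noncomputable section

/-- The matrix underlying an element of a subgroup `G` of the unitary group. -/
def gMat {d : ℕ} {G : Subgroup (Matrix.unitaryGroup (Fin d) ℂ)} (g : G) :
    Matrix (Fin d) (Fin d) ℂ :=
  ((g : Matrix.unitaryGroup (Fin d) ℂ) : Matrix (Fin d) (Fin d) ℂ)

/-- The distinguished vector `|0⟩ = e₀` of `ℂ^d`. -/
def e0 (d : ℕ) [NeZero d] : EuclideanSpace ℂ (Fin d) := EuclideanSpace.single 0 1

/-- Action of an element of `G` on `ℂ^d`. -/
def gAct {d : ℕ} {G : Subgroup (Matrix.unitaryGroup (Fin d) ℂ)} (g : G)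
    (v : EuclideanSpace ℂ (Fin d)) : EuclideanSpace ℂ (Fin d) :=
  Matrix.toEuclideanLin (gMat g) v

/-- `G` is a unitary 1-design. -/
def IsUnitaryOneDesign {d : ℕ} (G : Subgroup (Matrix.unitaryGroup (Fin d) ℂ)) [Fintype G] :
    Prop :=
  ∀ A : Matrix (Fin d) (Fin d) ℂ,
    (Fintype.card G : ℂ)⁻¹ • ∑ g : G, gMat g * A * star (gMat g) = (A.trace / d) • 1

/-- The operator `Π_G := (d/|G|) ∑_{g∈G} ⟨0|g†|0⟩ ρ(g)`. -/
def PiG {d : ℕ} [NeZero d] (G : Subgroup (Matrix.unitaryGroup (Fin d) ℂ)) [Fintype G]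
    {H_P : Type*} [NormedAddCommGroup H_P] [InnerProductSpace ℂ H_P] [CompleteSpace H_P]
    (ρ : G →* unitary (H_P →L[ℂ] H_P)) : H_P →L[ℂ] H_P :=
  ((d : ℂ) / (Fintype.card G : ℂ)) •
    ∑ g : G, (starRingEnd ℂ) (gMat g 0 0) • ((ρ g : H_P →L[ℂ] H_P))


theorem gAct_mul {d : ℕ} {G : Subgroup (Matrix.unitaryGroup (Fin d) ℂ)} (g h : G)
    (v : EuclideanSpace ℂ (Fin d)) : gAct (g * h) v = gAct g (gAct h v) := by
  simp [gAct, gMat, Matrix.toLpLin_apply, Matrix.mulVec_mulVec]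

theorem gAct_one {d : ℕ} {G : Subgroup (Matrix.unitaryGroup (Fin d) ℂ)}
    (v : EuclideanSpace ℂ (Fin d)) : gAct (1 : G) v = v := by
  simp [gAct, gMat, Matrix.toLpLin_apply]

theorem gMat_mul_star {d : ℕ} {G : Subgroup (Matrix.unitaryGroup (Fin d) ℂ)} (g : G) :
    gMat g * star (gMat g) = 1 := Unitary.mul_star_self_of_mem (g : Matrix.unitaryGroup (Fin d) ℂ).2

theorem gMat_star_mul {d : ℕ} {G : Subgroup (Matrix.unitaryGroup (Fin d) ℂ)} (g : G) :
    star (gMat g) * gMat g = 1 := Unitary.star_mul_self_of_mem (g : Matrix.unitaryGroup (Fin d) ℂ).2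

theorem gAct_inner {d : ℕ} {G : Subgroup (Matrix.unitaryGroup (Fin d) ℂ)} (g : G)
    (v w : EuclideanSpace ℂ (Fin d)) : ⟪gAct g v, gAct g w⟫ = ⟪v, w⟫ := by
  unfold gAct
  rw [← LinearMap.adjoint_inner_right, ← Matrix.toEuclideanLin_conjTranspose_eq_adjoint]
  have h := gMat_star_mul g
  rw [Matrix.star_eq_conjTranspose] at h
  simp [Matrix.toLpLin_apply, Matrix.mulVec_mulVec, h]

theorem gAct_inner_inv {d : ℕ} {G : Subgroup (Matrix.unitaryGroup (Fin d) ℂ)} (g : G)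
    (v w : EuclideanSpace ℂ (Fin d)) : ⟪gAct g v, w⟫ = ⟪v, gAct g⁻¹ w⟫ := by
  rw [← gAct_inner g v, ← gAct_mul, mul_inv_cancel, gAct_one]

/-- Schur: an operator commuting with the action of a 1-design is scalar. -/
theorem design_schur {d : ℕ} (G : Subgroup (Matrix.unitaryGroup (Fin d) ℂ)) [Fintype G]
    (hdesign : IsUnitaryOneDesign G)
    (A : EuclideanSpace ℂ (Fin d) →ₗ[ℂ] EuclideanSpace ℂ (Fin d))
    (hA : ∀ (g : G) v, A (gAct g v) = gAct g (A v)) : ∃ c : ℂ, ∀ v, A v = c • v := by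
  obtain ⟨M, rfl⟩ := (Matrix.toEuclideanLin (𝕜 := ℂ) (m := Fin d) (n := Fin d)).surjective A
  have hM : ∀ g : G, gMat g * M * star (gMat g) = M := by
    intro g
    have : gMat g * M = M * gMat g := by
      apply (Matrix.toEuclideanLin (𝕜 := ℂ) (m := Fin d) (n := Fin d)).injective
      ext1 v
      have := hA g v
      simp only [gAct, Matrix.toLpLin_apply, Matrix.mulVec_mulVec] at this ⊢
      exact this.symm
    rw [this, mul_assoc, gMat_mul_star, mul_one]
  have h := hdesign M
  simp only [hM, Finset.sum_const, Finset.card_univ] at h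
  have hc : (Fintype.card G : ℂ) ≠ 0 := by exact_mod_cast Fintype.card_ne_zero
  rw [← Nat.cast_smul_eq_nsmul ℂ, smul_smul, inv_mul_cancel₀ hc, one_smul] at h
  refine ⟨M.trace / d, fun v => ?_⟩
  generalize M.trace / d = c at h
  subst h
  simp [Matrix.toLpLin_apply, Matrix.smul_mulVec]

/-- The (unnormalised) encoder. -/
def encT {d : ℕ} [NeZero d] (G : Subgroup (Matrix.unitaryGroup (Fin d) ℂ)) [Fintype G]
    {H_P : Type*} [NormedAddCommGroup H_P] [InnerProductSpace ℂ H_P] [CompleteSpace H_P]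
    (ρ : G →* unitary (H_P →L[ℂ] H_P)) (Φ : H_P) : EuclideanSpace ℂ (Fin d) →L[ℂ] H_P :=
  ∑ g : G, (innerSL ℂ (gAct g (e0 d))).smulRight ((ρ g : H_P →L[ℂ] H_P) Φ)

theorem encT_apply {d : ℕ} [NeZero d] (G : Subgroup (Matrix.unitaryGroup (Fin d) ℂ)) [Fintype G]
    {H_P : Type*} [NormedAddCommGroup H_P] [InnerProductSpace ℂ H_P] [CompleteSpace H_P]
    (ρ : G →* unitary (H_P →L[ℂ] H_P)) (Φ : H_P) (v : EuclideanSpace ℂ (Fin d)) :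
    encT G ρ Φ v = ∑ g : G, ⟪gAct g (e0 d), v⟫ • ((ρ g : H_P →L[ℂ] H_P) Φ) := by
  simp [encT, ContinuousLinearMap.sum_apply]

theorem encT_gAct {d : ℕ} [NeZero d] (G : Subgroup (Matrix.unitaryGroup (Fin d) ℂ)) [Fintype G]
    {H_P : Type*} [NormedAddCommGroup H_P] [InnerProductSpace ℂ H_P] [CompleteSpace H_P]
    (ρ : G →* unitary (H_P →L[ℂ] H_P)) (Φ : H_P) (h : G) (v : EuclideanSpace ℂ (Fin d)) :
    encT G ρ Φ (gAct h v) = (ρ h : H_P →L[ℂ] H_P) (encT G ρ Φ v) := by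
  rw [encT_apply, encT_apply, map_sum, ← Equiv.sum_comp (Equiv.mulLeft h)]
  refine Finset.sum_congr rfl fun g _ => ?_
  simp [gAct_mul, gAct_inner]

theorem rho_inner {G : Type*} [Group G]
    {H_P : Type*} [NormedAddCommGroup H_P] [InnerProductSpace ℂ H_P] [CompleteSpace H_P]
    (ρ : G →* unitary (H_P →L[ℂ] H_P)) (g : G) (x y : H_P) :
    ⟪(ρ g : H_P →L[ℂ] H_P) x, (ρ g : H_P →L[ℂ] H_P) y⟫ = ⟪x, y⟫ := by
  rw [← ContinuousLinearMap.adjoint_inner_right, ← ContinuousLinearMap.star_eq_adjoint,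
    ← ContinuousLinearMap.mul_apply, Unitary.star_mul_self_of_mem (ρ g).2]
  rfl

theorem encT_inner {d : ℕ} [NeZero d] (G : Subgroup (Matrix.unitaryGroup (Fin d) ℂ)) [Fintype G]
    {H_P : Type*} [NormedAddCommGroup H_P] [InnerProductSpace ℂ H_P] [CompleteSpace H_P]
    (ρ : G →* unitary (H_P →L[ℂ] H_P)) (hdesign : IsUnitaryOneDesign G) (Φ : H_P) :
    ∃ c : ℂ, ∀ v w, ⟪encT G ρ Φ v, encT G ρ Φ w⟫ = c * ⟪v, w⟫ := by
  obtain ⟨c, hc⟩ := design_schur G hdesign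
    ((ContinuousLinearMap.adjoint (encT G ρ Φ) ∘L encT G ρ Φ :
      EuclideanSpace ℂ (Fin d) →L[ℂ] EuclideanSpace ℂ (Fin d)) : _ →ₗ[ℂ] _) (by
    intro g v
    apply ext_inner_right ℂ
    intro w
    rw [gAct_inner_inv]
    simp only [ContinuousLinearMap.coe_coe, ContinuousLinearMap.comp_apply,
      ContinuousLinearMap.adjoint_inner_left]
    rw [← rho_inner ρ g (encT G ρ Φ v), ← encT_gAct, ← encT_gAct, ← gAct_mul, mul_inv_cancel,
      gAct_one])
  refine ⟨c, fun v w => ?_⟩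
  rw [← ContinuousLinearMap.adjoint_inner_right, ← inner_smul_right, ← hc w]
  rfl

theorem PiG_eq {d : ℕ} [NeZero d] (G : Subgroup (Matrix.unitaryGroup (Fin d) ℂ)) [Fintype G]
    {H_P : Type*} [NormedAddCommGroup H_P] [InnerProductSpace ℂ H_P] [CompleteSpace H_P]
    (ρ : G →* unitary (H_P →L[ℂ] H_P)) (Φ : H_P) :
    PiG G ρ Φ = ((d : ℂ) / (Fintype.card G : ℂ)) • encT G ρ Φ (e0 d) := by
  rw [encT_apply, PiG]
  simp [ContinuousLinearMap.sum_apply, gAct, e0, Matrix.toLpLin_apply, EuclideanSpace.inner_single_right]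

/-- With the encoding `|ī⟩ := N ∑_g ⟨0|g†|i⟩ ρ(g)|Φ⟩`, `N = (d/|G|)/‖Π_G|Φ⟩‖`, physical matrix
elements equal logical matrix elements: `⟨ī|ρ(g)|j̄⟩ = ⟨i|g|j⟩`. -/
theorem physical_matrix_elements (d : ℕ) [NeZero d]
    (G : Subgroup (Matrix.unitaryGroup (Fin d) ℂ)) [Fintype G]
    {H_P : Type*} [NormedAddCommGroup H_P] [InnerProductSpace ℂ H_P] [CompleteSpace H_P]
    (ρ : G →* unitary (H_P →L[ℂ] H_P))
    (hdesign : IsUnitaryOneDesign G)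
    (gs : Fin d → G)
    (hbasis : Orthonormal ℂ (fun i : Fin d => gAct (gs i) (e0 d)))
    (Φ : H_P) (hΦ : PiG G ρ Φ ≠ 0)
    (ibar : Fin d → H_P)
    (hibar : ∀ i : Fin d,
      ibar i = (((d : ℂ) / (Fintype.card G : ℂ)) / (‖PiG G ρ Φ‖ : ℂ)) •
        ∑ g : G, ⟪gAct g (e0 d), gAct (gs i) (e0 d)⟫ • ((ρ g : H_P →L[ℂ] H_P) Φ)) :
    ∀ (i j : Fin d) (g : G),
      ⟪ibar i, (ρ g : H_P →L[ℂ] H_P) (ibar j)⟫ =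
        ⟪gAct (gs i) (e0 d), gAct g (gAct (gs j) (e0 d))⟫ := by
  intro i j g
  obtain ⟨c, hc⟩ := encT_inner G ρ hdesign Φ
  have hP := PiG_eq G ρ Φ
  have h0 : ⟪PiG G ρ Φ, PiG G ρ Φ⟫ = (starRingEnd ℂ) ((d : ℂ) / (Fintype.card G : ℂ)) *
      (((d : ℂ) / (Fintype.card G : ℂ)) * c) := by
    rw [hP, inner_smul_left, inner_smul_right, hc]
    simp [e0]
  rw [inner_self_eq_norm_sq_to_K] at h0
  have hn : (‖PiG G ρ Φ‖ : ℂ) ≠ 0 := by simpa using hΦ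
  rw [hibar i, hibar j, ← encT_apply, ← encT_apply, map_smul, ← encT_gAct, inner_smul_left,
    inner_smul_right, hc]
  rw [map_div₀, Complex.conj_ofReal]
  generalize ⟪gAct (gs i) (e0 d), gAct g (gAct (gs j) (e0 d))⟫ = x
  generalize (d : ℂ) / (Fintype.card G : ℂ) = r at *
  have h1 : (‖PiG G ρ Φ‖ : ℂ) ^ 2 = (starRingEnd ℂ) r * (r * c) := h0
  generalize (‖PiG G ρ Φ‖ : ℂ) = n at *
  field_simp
  linear_combination (-x) * h1

end
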